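/- Let α > 0, D > 0, L > 0 and let c satisfy 0 ≤ c ≤ L. Define g(x) = e^{−αx} / ((x − c)² + D) for x ∈ [0, L]. If D < c(2 − αc)/α, then α²D < 1, the point x* = c + (√(1 − α²D) − 1)/α satisfies 0 < x* ≤ c, and g(x*) ≥ g(x) for all x ∈ [0, L]; that is, x* is a global maximizer of g on [0, L]. -/

import Mathlib

/-!
In the dimensionless variables `k = 1 - √(1 - α²D) ∈ (0, 1]` and `t = α (x - x⋆)`, one has
`α² ((x - c)² + D) = t² - 2kt + 2k`, with value `2k` at the candidate `x⋆ = c - k/α`. Hence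
`g x ≤ g x⋆` says exactly `2k ≤ eᵗ (t² - 2kt + 2k)`. The right side has derivative
`eᵗ t (t + 2(1 - k))`, so the inequality holds as long as `t ≥ -2(1 - k)`, i.e. to the right of
the other critical point. The hypothesis on `D` reads `(1 - αc)² < 1 - α²D`, that is
`k < αc < 2 - k`: the first bound gives `0 < x⋆`, and the second puts all of `x ≥ 0` in the
admissible range of `t`.

Instead of differentiating, `key_ineq` uses `1 + t + t²/2 ≤ eᵗ` for `t ≥ 0`, and the Padé bound
`eʳ ≤ (2 + r)/(2 - r)` with `r = -t` for `t < 0`.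
-/

/-- The Padé bound `eʳ ≤ (2 + r)/(2 - r)`, with the denominator cleared. -/
lemma two_sub_mul_exp_le {r : ℝ} (h0 : 0 ≤ r) (h2 : r < 2) :
    (2 - r) * Real.exp r ≤ 2 + r := by
  have h : 0 < 2 - r := by linarith
  -- `x = 2r/(2 - r)` solves `2x/(x + 2) = r`, and `1 + x = (2 + r)/(2 - r)`.
  have hl := Real.le_log_one_add_of_nonneg (x := 2 * r / (2 - r)) (by positivity)
  have e1 : 2 * (2 * r / (2 - r)) / (2 * r / (2 - r) + 2) = r := by
    have : 2 * r / (2 - r) + 2 = 4 / (2 - r) := by field_simp; ring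
    rw [this]; field_simp; ring
  have e2 : 1 + 2 * r / (2 - r) = (2 + r) / (2 - r) := by field_simp; ring
  rw [e1, e2, Real.le_log_iff_exp_le (by positivity), le_div_iff₀ h] at hl
  linarith

/-- The maximality of the candidate point in dimensionless form. -/
lemma key_ineq {k t : ℝ} (hk : 0 < k) (hk1 : k ≤ 1) (ht : -(2 * (1 - k)) ≤ t) :
    2 * k ≤ Real.exp t * (t ^ 2 - 2 * k * t + 2 * k) := by
  have hq : 0 ≤ t ^ 2 - 2 * k * t + 2 * k := by nlinarith [sq_nonneg (t - k)]
  rcases le_total 0 t with h | h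
  · have he := mul_le_mul_of_nonneg_right (Real.quadratic_le_exp_of_nonneg h) hq
    have h1 : 0 ≤ (1 - k) * t ^ 2 + (1 - k) * t ^ 3 + t ^ 4 / 2 := by
      have : 0 ≤ 1 - k := by linarith
      positivity
    nlinarith
  · have hr : 0 < 2 + t := by linarith
    have hp := two_sub_mul_exp_le (r := -t) (by linarith) (by linarith)
    have h1 : 2 * k * Real.exp (-t) ≤ t ^ 2 - 2 * k * t + 2 * k := by
      refine le_of_mul_le_mul_left ?_ hr
      have h2 := mul_le_mul_of_nonneg_left hp (by linarith : 0 ≤ 2 * k)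
      -- The slack is `t² (2 + t - 2k)`.
      have h3 : 0 ≤ t ^ 2 * (2 + t - 2 * k) := mul_nonneg (sq_nonneg t) (by linarith)
      nlinarith
    have h2 := mul_le_mul_of_nonneg_left h1 (Real.exp_pos t).le
    have h3 : Real.exp t * Real.exp (-t) = 1 := by rw [← Real.exp_add]; simp
    calc 2 * k = Real.exp t * (2 * k * Real.exp (-t)) := by linear_combination (-2 * k) * h3
      _ ≤ _ := h2

theorem optimal_pa_position_interior_case
    (α D L c : ℝ) (hα : 0 < α) (hD : 0 < D) (hL : 0 < L)
    (hc0 : 0 ≤ c) (hcL : c ≤ L)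
    (g : ℝ → ℝ) (hg : ∀ x, g x = Real.exp (-α * x) / ((x - c) ^ 2 + D))
    (hcase : D < c * (2 - α * c) / α) :
    α ^ 2 * D < 1 ∧
    0 < c + (Real.sqrt (1 - α ^ 2 * D) - 1) / α ∧
    c + (Real.sqrt (1 - α ^ 2 * D) - 1) / α ≤ c ∧
    ∀ x ∈ Set.Icc (0:ℝ) L, g x ≤ g (c + (Real.sqrt (1 - α ^ 2 * D) - 1) / α) := by
  rw [lt_div_iff₀ hα] at hcase
  have hm : (1 - α * c) ^ 2 < 1 - α ^ 2 * D := by nlinarith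
  have hlt : α ^ 2 * D < 1 := by nlinarith [sq_nonneg (1 - α * c)]
  have hδ : 0 < α ^ 2 * D := by positivity
  have hs0 := Real.sqrt_nonneg (1 - α ^ 2 * D)
  have hs2 := Real.sq_sqrt (by linarith : 0 ≤ 1 - α ^ 2 * D)
  set s := Real.sqrt (1 - α ^ 2 * D)
  have hs1 : s < 1 := by nlinarith
  rw [← hs2] at hm
  obtain ⟨hm1, hm2⟩ := abs_lt.mp (abs_lt_of_sq_lt_sq hm hs0)
  refine ⟨hlt, ?_, ?_, fun x hx => ?_⟩
  · have : c + (s - 1) / α = (α * c + (s - 1)) / α := by field_simp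
    rw [this]
    exact div_pos (by linarith) hα
  · have := div_nonpos_of_nonpos_of_nonneg (by linarith : s - 1 ≤ 0) hα.le
    linarith
  · obtain ⟨y, hy⟩ : ∃ y, y = (s - 1) / α := ⟨_, rfl⟩
    have hay : α * y = s - 1 := by rw [hy]; field_simp
    rw [← hy, hg, hg, div_le_div_iff₀ (by positivity) (by positivity)]
    have hax : 0 ≤ α * x := mul_nonneg hα.le hx.1
    have hkey := key_ineq (k := 1 - s) (t := α * (x - (c + y))) (by linarith) (by linarith)
      (by nlinarith)
    have hexp : Real.exp (-α * (c + y)) =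
        Real.exp (-α * x) * Real.exp (α * (x - (c + y))) := by
      rw [← Real.exp_add]; congr 1; ring
    rw [hexp, mul_assoc]
    refine mul_le_mul_of_nonneg_left ?_ (Real.exp_pos _).le
    refine le_of_mul_le_mul_left ?_ (by positivity : 0 < α ^ 2)
    have e1 : α ^ 2 * ((c + y - c) ^ 2 + D) = 2 * (1 - s) := by
      linear_combination (α * y + s - 1) * hay + hs2
    have e2 : α ^ 2 * ((x - c) ^ 2 + D) = (α * (x - (c + y))) ^ 2
        - 2 * (1 - s) * (α * (x - (c + y))) + 2 * (1 - s) := by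
      linear_combination (2 * α * (x - c) - α * y + s - 1) * hay + hs2
    calc _ = 2 * (1 - s) := e1
      _ ≤ _ := hkey
      _ = _ := by rw [← e2]; ring
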